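/- Suppose there is no nonzero element a of K such that N_{K/F}(c) = N_{K/F}(a)^2 (i.e., N_{K/F}(c) is not the square of a norm of a nonzero element of K). Then the multiplication of Cay(K,c,σ₁,σ₂,σ₃,σ₄) has no zero divisors: for all u, v, x, y ∈ K, if u·x + c·σ₁(v)·σ₂(y) = 0 and σ₃(u)·y + v·σ₄(x) = 0, then (u = 0 and v = 0) or (x = 0 and y = 0). In particular Cay(K,c,σ₁,σ₂,σ₃,σ₄) is a division algebra. -/

import Mathlib

/-!
Let `N` be a multiplicative map preserved by every `σᵢ`. If `(u, v) · (x, y) = 0`, then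
`u x = -c σ₁(v) σ₂(y)` and `v σ₄(x) = -σ₃(u) y`. Multiplying these equations makes the signs
cancel, and applying `N` yields `N(u) N(v) N(x)² = N(u) N(v) N(c) N(y)²`. If both factors are
nonzero, then so are all four components, and `N(c) = N(x y⁻¹)²`.
-/

/-- Multiplication in the Cayley–Dickson-type algebra `Cay(K, c, σ₁, σ₂, σ₃, σ₄)`, through which
its zero divisors are studied. The `σᵢ` are bare maps, so that automorphisms, endomorphisms and
isometries of `K` are all covered. -/
def cayMul {K : Type*} [Mul K] [Add K] (c : K) (σ₁ σ₂ σ₃ σ₄ : K → K) (p q : K × K) : K × K :=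
  (p.1 * q.1 + c * σ₁ p.2 * σ₂ q.2, σ₃ p.1 * q.2 + p.2 * σ₄ q.1)

section

variable {K M : Type*} {c : K} {σ₁ σ₂ σ₃ σ₄ : K → K} {p q : K × K}

lemma components_ne_zero_of_cayMul_eq_zero [NonUnitalNonAssocSemiring K] [NoZeroDivisors K]
    (hc : c ≠ 0) (hσ₁ : ∀ z, σ₁ z = 0 ↔ z = 0) (hσ₂ : ∀ z, σ₂ z = 0 ↔ z = 0)
    (hσ₃ : ∀ z, σ₃ z = 0 ↔ z = 0) (hσ₄ : ∀ z, σ₄ z = 0 ↔ z = 0)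
    (h : cayMul c σ₁ σ₂ σ₃ σ₄ p q = 0) (hp : p ≠ 0) (hq : q ≠ 0) :
    (p.1 ≠ 0 ∧ p.2 ≠ 0) ∧ q.1 ≠ 0 ∧ q.2 ≠ 0 := by
  obtain ⟨u, v⟩ := p
  obtain ⟨x, y⟩ := q
  obtain ⟨h_fst, h_snd⟩ := Prod.mk_eq_zero.mp h
  have h_fst_iff : u = 0 ∨ x = 0 ↔ v = 0 ∨ y = 0 := by
    simpa only [mul_eq_zero, hc, hσ₁, hσ₂, false_or] using
      eq_zero_iff_eq_zero_of_add_eq_zero h_fst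
  have h_snd_iff : u = 0 ∨ y = 0 ↔ v = 0 ∨ x = 0 := by
    simpa only [mul_eq_zero, hσ₃, hσ₄] using eq_zero_iff_eq_zero_of_add_eq_zero h_snd
  simp only [ne_eq, Prod.mk_eq_zero] at hp hq ⊢
  tauto

lemma map_mul_map_sq_of_cayMul_eq_zero [NonAssocRing K] [CommMonoid M] (N : K →* M)
    (hσ₁ : ∀ z, N (σ₁ z) = N z) (hσ₂ : ∀ z, N (σ₂ z) = N z)
    (hσ₃ : ∀ z, N (σ₃ z) = N z) (hσ₄ : ∀ z, N (σ₄ z) = N z)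
    (h : cayMul c σ₁ σ₂ σ₃ σ₄ p q = 0) :
    N p.1 * N p.2 * N q.1 ^ 2 = N p.1 * N p.2 * (N c * N q.2 ^ 2) := by
  obtain ⟨u, v⟩ := p
  obtain ⟨x, y⟩ := q
  obtain ⟨h_fst, h_snd⟩ := Prod.mk_eq_zero.mp h
  have h_prod : u * x * (v * σ₄ x) = c * σ₁ v * σ₂ y * (σ₃ u * y) := by
    rw [eq_neg_of_add_eq_zero_left h_fst, eq_neg_of_add_eq_zero_right h_snd, neg_mul_neg]
  have h_map := congrArg N h_prod
  simp only [map_mul, hσ₁, hσ₂, hσ₃, hσ₄] at h_map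
  calc
    N u * N v * N x ^ 2 = N u * N x * (N v * N x) := by rw [sq, mul_mul_mul_comm]
    _ = N c * N v * N y * (N u * N y) := h_map
    _ = N u * N v * (N c * N y ^ 2) := by
      rw [sq]
      ac_rfl

lemma map_eq_map_mul_inv_sq [GroupWithZero K] [CommMonoid M] (N : K →* M) {x y : K}
    (hy : y ≠ 0) (h : N x ^ 2 = N c * N y ^ 2) : N c = N (x * y⁻¹) ^ 2 := by
  calc
    N c = N c * N y ^ 2 * N y⁻¹ ^ 2 := by
      rw [mul_assoc, ← mul_pow, ← map_mul, mul_inv_cancel₀ hy, map_one, one_pow, mul_one]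
    _ = N (x * y⁻¹) ^ 2 := by rw [← h, ← mul_pow, ← map_mul]

theorem cay_separable_field_no_zero_divisors_general [DivisionRing K] [CommMonoidWithZero M]
    [Nontrivial M] (N : K →*₀ M) (hσ₁ : ∀ z, N (σ₁ z) = N z) (hσ₂ : ∀ z, N (σ₂ z) = N z)
    (hσ₃ : ∀ z, N (σ₃ z) = N z) (hσ₄ : ∀ z, N (σ₄ z) = N z) (hc : c ≠ 0)
    (hcN : ¬ ∃ a : K, a ≠ 0 ∧ N c = N a ^ 2) (h : cayMul c σ₁ σ₂ σ₃ σ₄ p q = 0) :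
    p = 0 ∨ q = 0 := by
  have eq_zero_iff {σ : K → K} (hσ : ∀ z, N (σ z) = N z) (z : K) : σ z = 0 ↔ z = 0 := by
    rw [← map_eq_zero N, hσ, map_eq_zero]
  by_contra! hpq
  obtain ⟨⟨hu, hv⟩, hx, hy⟩ := components_ne_zero_of_cayMul_eq_zero hc (eq_zero_iff hσ₁)
    (eq_zero_iff hσ₂) (eq_zero_iff hσ₃) (eq_zero_iff hσ₄) h hpq.1 hpq.2
  have h_unit : IsUnit (N p.1 * N p.2) := (hu.isUnit.map N).mul (hv.isUnit.map N)
  have h_sq : N q.1 ^ 2 = N c * N q.2 ^ 2 :=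
    h_unit.mul_left_cancel
      (map_mul_map_sq_of_cayMul_eq_zero (N : K →* M) hσ₁ hσ₂ hσ₃ hσ₄ h)
  exact hcN ⟨q.1 * q.2⁻¹, mul_ne_zero hx (inv_ne_zero hy),
    map_eq_map_mul_inv_sq (N : K →* M) hy h_sq⟩

end

/-- If `N_{K/F}(c)` is not the square of the norm of a nonzero element of the
finite separable field extension `K/F`, then `Cay(K,c,σ₁,σ₂,σ₃,σ₄)` has no zero divisors,
hence is a division algebra. -/
theorem cay_separable_field_no_zero_divisors
    {F K : Type*} [Field F] [Field K] [Algebra F K]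
    [FiniteDimensional F K] [Algebra.IsSeparable F K]
    (σ₁ σ₂ σ₃ σ₄ : K ≃ₐ[F] K) (c : K) (hc : c ≠ 0)
    (hcN : ¬ ∃ a : K, a ≠ 0 ∧ Algebra.norm F c = (Algebra.norm F a) ^ 2) :
    ∀ u v x y : K,
      u * x + c * σ₁ v * σ₂ y = 0 → σ₃ u * y + v * σ₄ x = 0 →
        (u = 0 ∧ v = 0) ∨ (x = 0 ∧ y = 0) := by
  intro u v x y h_fst h_snd
  let N : K →*₀ F := { Algebra.norm F with map_zero' := Algebra.norm_zero }
  have hN (σ : K ≃ₐ[F] K) (z : K) : N (σ z) = N z := Algebra.norm_eq_of_algEquiv σ z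
  simpa only [Prod.mk_eq_zero] using
    cay_separable_field_no_zero_divisors_general (p := (u, v)) (q := (x, y)) N
      (hN σ₁) (hN σ₂) (hN σ₃) (hN σ₄) hc hcN (Prod.ext h_fst h_snd)
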